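/- Let k be a field of characteristic 0. The generic 3×3 permanent per₃ cannot be written as a linear combination of 13 or fewer cubes of linear forms; that is, the Waring rank of per₃ is at least 14. -/

import Mathlib

open MvPolynomial

/-- The generic 3×3 permanent, a cubic form in the 9 variables `x_{i,j}`. -/
noncomputable def per3 (k : Type*) [CommRing k] : MvPolynomial (Fin 3 × Fin 3) k :=
  ∑ σ : Equiv.Perm (Fin 3), ∏ i : Fin 3, X (i, σ i)

/-- The linear form with coefficient vector `a`. -/
noncomputable def linForm {k : Type*} [CommRing k] {n : Type*} [Fintype n]
    (a : n → k) : MvPolynomial n k :=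
  ∑ i, C (a i) * X i

open Matrix

namespace Matrix

variable {R : Type*} [Field R] {m n : Type*} [Fintype n]

theorem rank_add_le_add (A B : Matrix m n R) [Finite m] : (A + B).rank ≤ A.rank + B.rank := by
  have hrange : LinearMap.range (A + B).mulVecLin ≤
      LinearMap.range A.mulVecLin ⊔ LinearMap.range B.mulVecLin := by
    rw [mulVecLin_add]
    exact LinearMap.range_add_le A.mulVecLin B.mulVecLin
  exact (Submodule.finrank_mono hrange).trans
    (Submodule.finrank_add_le_finrank_add_finrank _ _)

theorem rank_sum_le {ι : Type*} [Finite m] (s : Finset ι) (A : ι → Matrix m n R) :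
    (∑ i ∈ s, A i).rank ≤ ∑ i ∈ s, (A i).rank := by
  classical
  induction s using Finset.induction_on with
  | empty => simp
  | insert i s hi ih =>
    rw [Finset.sum_insert hi, Finset.sum_insert hi]
    exact (rank_add_le_add _ _).trans (Nat.add_le_add_left ih _)

/-- A sequence of nonzero entries of a matrix, such that the row of each of them vanishes in the
columns of all later ones, bounds the rank from below. -/
theorem length_le_rank_of_pairwise (A : Matrix m n R) (L : List (m × n))
    (hzero : L.Pairwise fun x y => A x.1 y.2 = 0) (hne : ∀ x ∈ L, A x.1 x.2 ≠ 0) :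
    L.length ≤ A.rank := by
  let N := A.submatrix (fun i : Fin L.length => (L.get i).1) fun i => (L.get i).2
  have htri : N.IsLowerTriangular := fun i j hij =>
    List.pairwise_iff_get.1 hzero i j hij
  have hdet : N.det ≠ 0 := by
    rw [det_of_isLowerTriangular N htri]
    exact Finset.prod_ne_zero_iff.2 fun i _ => hne _ (L.get_mem i)
  calc L.length = N.rank := by rw [rank_of_det_ne_zero hdet, Fintype.card_fin]
    _ ≤ A.rank := rank_submatrix_le _ _ _

/-- Whether a list of positions in a matrix consists of nonzero entries such that the row of each
of them vanishes in the columns of all later ones. -/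
def isTriangularPivotList {R m n : Type*} [Zero R] [DecidableEq R] (A : Matrix m n R) :
    List (m × n) → Bool
  | [] => true
  | x :: L => !decide (A x.1 x.2 = 0) && L.all (fun y => decide (A x.1 y.2 = 0)) &&
      isTriangularPivotList A L

theorem isTriangularPivotList_iff {R m n : Type*} [Zero R] [DecidableEq R] (A : Matrix m n R)
    (L : List (m × n)) :
    isTriangularPivotList A L = true ↔
      (L.Pairwise fun x y => A x.1 y.2 = 0) ∧ ∀ x ∈ L, A x.1 x.2 ≠ 0 := by
  induction L with
  | nil => simp [isTriangularPivotList]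
  | cons x L ih =>
    simp only [isTriangularPivotList, Bool.and_eq_true, ih, Bool.not_eq_true',
      decide_eq_false_iff_not,
      List.all_eq_true, decide_eq_true_eq, List.pairwise_cons, List.forall_mem_cons]
    tauto

end Matrix

section Wedge

variable {R : Type*} [CommRing R]

/-- The matrix of `v ∧ · : R⁵ → ⋀² R⁵` in the standard bases, ordered lexicographically. -/
def wedgeOne (v : Fin 5 → R) : Matrix (Fin 10) (Fin 5) R :=
  !![-v 1, v 0, 0, 0, 0;
     -v 2, 0, v 0, 0, 0;
     -v 3, 0, 0, v 0, 0;
     -v 4, 0, 0, 0, v 0;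
     0, -v 2, v 1, 0, 0;
     0, -v 3, 0, v 1, 0;
     0, -v 4, 0, 0, v 1;
     0, 0, -v 3, v 2, 0;
     0, 0, -v 4, 0, v 2;
     0, 0, 0, -v 4, v 3]

/-- The matrix of `v ∧ · : ⋀² R⁵ → ⋀³ R⁵` in the standard bases, ordered lexicographically. -/
def wedgeTwo (v : Fin 5 → R) : Matrix (Fin 10) (Fin 10) R :=
  !![v 2, -v 1, 0, 0, v 0, 0, 0, 0, 0, 0;
     v 3, 0, -v 1, 0, 0, v 0, 0, 0, 0, 0;
     v 4, 0, 0, -v 1, 0, 0, v 0, 0, 0, 0;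
     0, v 3, -v 2, 0, 0, 0, 0, v 0, 0, 0;
     0, v 4, 0, -v 2, 0, 0, 0, 0, v 0, 0;
     0, 0, v 4, -v 3, 0, 0, 0, 0, 0, v 0;
     0, 0, 0, 0, v 3, -v 2, 0, v 1, 0, 0;
     0, 0, 0, 0, v 4, 0, -v 2, 0, v 1, 0;
     0, 0, 0, 0, 0, v 4, -v 3, 0, 0, v 1;
     0, 0, 0, 0, 0, 0, 0, v 4, -v 3, v 2]

theorem wedgeTwo_mul_wedgeOne (v : Fin 5 → R) : wedgeTwo v * wedgeOne v = 0 := by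
  ext i j
  fin_cases i <;> fin_cases j <;>
    simp [wedgeOne, wedgeTwo, Matrix.mul_apply, Fin.sum_univ_succ] <;> ring

theorem wedgeTwo_sum_smul {ι : Type*} (s : Finset ι) (c : ι → R) (v : ι → Fin 5 → R) :
    wedgeTwo (∑ i ∈ s, c i • v i) = ∑ i ∈ s, c i • wedgeTwo (v i) := by
  ext p q
  rw [Matrix.sum_apply]
  fin_cases p <;> fin_cases q <;> simp [wedgeTwo]

theorem wedgeTwo_intCast (v : Fin 5 → ℤ) (p q : Fin 10) :
    wedgeTwo (fun j => (v j : R)) p q = (wedgeTwo v p q : ℤ) := by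
  fin_cases p <;> fin_cases q <;> simp [wedgeTwo]

end Wedge

theorem four_le_rank_wedgeOne {k : Type*} [Field k] {v : Fin 5 → k} (hv : v ≠ 0) :
    4 ≤ (wedgeOne v).rank := by
  obtain ⟨j, hj⟩ := Function.ne_iff.1 hv
  have hker : LinearMap.ker (wedgeOne v).mulVecLin ≤ Submodule.span k {v} := by
    intro x hx
    have hx' : (wedgeOne v).mulVec x = 0 := hx
    have hparallel : ∀ p q, v p * x q = v q * x p := by
      have h := congrFun hx'
      simp only [Fin.forall_fin_succ, wedgeOne] at h
      simp [Matrix.mulVec, dotProduct, Fin.sum_univ_succ] at h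
      obtain ⟨h01, h02, h03, h04, h12, h13, h14, h23, h24, h34⟩ := h
      intro p q
      fin_cases p <;> fin_cases q <;>
        simp only [Fin.zero_eta, Fin.mk_one, Fin.reduceFinMk] <;>
        first
        | linear_combination h01 | linear_combination -h01
        | linear_combination h02 | linear_combination -h02
        | linear_combination h03 | linear_combination -h03
        | linear_combination h04 | linear_combination -h04
        | linear_combination h12 | linear_combination -h12
        | linear_combination h13 | linear_combination -h13
        | linear_combination h14 | linear_combination -h14
        | linear_combination h23 | linear_combination -h23
        | linear_combination h24 | linear_combination -h24
        | linear_combination h34 | linear_combination -h34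
    refine Submodule.mem_span_singleton.2 ⟨x j / v j, funext fun q => ?_⟩
    have hj' : v j ≠ 0 := hj
    simp only [Pi.smul_apply, smul_eq_mul]
    field_simp
    linear_combination -hparallel j q
  have hle := (Submodule.finrank_mono hker).trans (finrank_span_singleton hv).le
  have hrn := (wedgeOne v).mulVecLin.finrank_range_add_finrank_ker
  rw [Module.finrank_fin_fun] at hrn
  rw [Matrix.rank]
  omega

theorem rank_wedgeTwo_le {k : Type*} [Field k] (v : Fin 5 → k) : (wedgeTwo v).rank ≤ 6 := by
  by_cases hv : v = 0
  · have : wedgeTwo v = 0 := by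
      subst hv
      ext p q
      fin_cases p <;> fin_cases q <;> simp [wedgeTwo]
    simp [this]
  · have h := Matrix.rank_add_rank_le_card_of_mul_eq_zero (wedgeTwo_mul_wedgeOne v)
    have := four_le_rank_wedgeOne hv
    rw [Fintype.card_fin] at h
    omega

/-- The Koszul flattening `⋀² R⁵ ⊗ Rⁿ → ⋀³ R⁵ ⊗ Rⁿ` of a tensor in `R⁵ ⊗ Rⁿ ⊗ Rⁿ`. -/
def koszulFlattening {R n : Type*} [CommRing R] (T : n → n → Fin 5 → R) :
    Matrix (Fin 10 × n) (Fin 10 × n) R :=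
  fun x y => wedgeTwo (T x.2 y.2) x.1 y.1

theorem rank_koszulFlattening_le {k n ι : Type*} [Field k] [Fintype n] [Fintype ι]
    (v : ι → Fin 5 → k) (a b : ι → n → k) :
    (koszulFlattening fun x y => ∑ i, (a i x * b i y) • v i).rank ≤ 6 * Fintype.card ι := by
  classical
  have hsum : (koszulFlattening fun x y => ∑ i, (a i x * b i y) • v i) =
      ∑ i, (Matrix.of fun (x : Fin 10 × n) p => if x.1 = p then a i x.2 else 0) *
        wedgeTwo (v i) *
        (Matrix.of fun q (y : Fin 10 × n) => if q = y.1 then b i y.2 else 0) := by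
    ext x y
    rw [koszulFlattening, wedgeTwo_sum_smul, Matrix.sum_apply, Matrix.sum_apply]
    refine Finset.sum_congr rfl fun i _ => ?_
    simp [Matrix.mul_apply]
    ring
  rw [hsum]
  refine (Matrix.rank_sum_le _ _).trans ?_
  refine (Finset.sum_le_card_nsmul _ _ 6 fun i _ => ?_).trans (by simp [mul_comm])
  exact (Matrix.rank_mul_le_left _ _).trans
    ((Matrix.rank_mul_le_right _ _).trans (rank_wedgeTwo_le _))

/-- The entry at `(x, y)` of the Hessian of the derivative of `per₃` in the direction `w`: the
coordinate of `w` in the row and the column that `x` and `y` miss. -/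
def perHessian {R : Type*} [Zero R] (w : Fin 3 × Fin 3 → R) (x y : Fin 3 × Fin 3) : R :=
  if x.1 = y.1 ∨ x.2 = y.2 then 0 else w (-(x.1 + y.1), -(x.2 + y.2))

/-- The full polarization of a function of degree three. -/
def polarization {V R : Type*} [Add V] [CommRing R] (f : V → R) (x y z : V) : R :=
  f (x + y + z) - f (x + y) - f (x + z) - f (y + z) + f x + f y + f z

theorem eval_per3 {R : Type*} [CommRing R] (x : Fin 3 × Fin 3 → R) :
    eval x (per3 R) =
      x (0, 0) * (x (1, 1) * x (2, 2) + x (1, 2) * x (2, 1)) +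
      x (0, 1) * (x (1, 0) * x (2, 2) + x (1, 2) * x (2, 0)) +
      x (0, 2) * (x (1, 0) * x (2, 1) + x (1, 1) * x (2, 0)) := by
  have hperm : (Finset.univ : Finset (Equiv.Perm (Fin 3))) =
      {1, Equiv.swap 0 1, Equiv.swap 0 2, Equiv.swap 1 2,
        Equiv.swap 0 1 * Equiv.swap 1 2, Equiv.swap 1 2 * Equiv.swap 0 1} := by
    decide
  rw [per3, hperm]
  repeat rw [Finset.sum_insert (by decide)]
  rw [Finset.sum_singleton]
  simp [Fin.prod_univ_three, Equiv.swap_apply_def]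
  ring

theorem polarization_eval_per3 {R : Type*} [CommRing R] (w y z : Fin 3 × Fin 3 → R) :
    polarization (fun u => eval u (per3 R)) w y z =
      ∑ a, ∑ b, perHessian w a b * y a * z b := by
  have h₁ : (-1 : Fin 3) = 2 := rfl
  have h₂ : (-2 : Fin 3) = 1 := rfl
  have h₁₂ : (1 + 2 : Fin 3) = 0 := rfl
  have h₂₁ : (2 + 1 : Fin 3) = 0 := rfl
  simp [polarization, eval_per3, perHessian, Fintype.sum_prod_type, Fin.sum_univ_three,
    -neg_add_rev, h₁, h₂, h₁₂, h₂₁]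
  ring

theorem eval_linForm {R n : Type*} [CommRing R] [Fintype n] (a x : n → R) :
    eval x (linForm a) = a ⬝ᵥ x := by
  simp [linForm, dotProduct]

theorem polarization_eval_sum_cubes {R n ι : Type*} [CommRing R] [Fintype n] [Fintype ι]
    (c : ι → R) (a : ι → n → R) (x y z : n → R) :
    polarization (fun u => eval u (∑ i, C (c i) * linForm (a i) ^ 3)) x y z =
      ∑ i, 6 * c i * (a i ⬝ᵥ x) * (a i ⬝ᵥ y) * (a i ⬝ᵥ z) := by
  simp only [polarization, map_sum, map_mul, map_pow, eval_C, eval_linForm, dotProduct_add,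
    ← Finset.sum_sub_distrib, ← Finset.sum_add_distrib]
  exact Finset.sum_congr rfl fun i _ => by ring

/-- The directions `e₀₀`, `e₁₁`, `e₂₂`, `e₀₁ + e₁₂`, `e₁₂ + e₂₀`. -/
def directions (j : Fin 5) (x : Fin 3 × Fin 3) : ℤ :=
  if x ∈ (![[(0, 0)], [(1, 1)], [(2, 2)], [(0, 1), (1, 2)], [(1, 2), (2, 0)]] j :
    List (Fin 3 × Fin 3)) then 1 else 0

/-- Positions of pivots in the Koszul flattening of `per₃` along `directions`. -/
def pivots : List ((Fin 10 × Fin 3 × Fin 3) × (Fin 10 × Fin 3 × Fin 3)) :=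
  [((0, 0, 1), (0, 1, 0)), ((0, 0, 2), (1, 2, 0)), ((0, 1, 0), (0, 0, 1)), ((0, 1, 2), (4, 2, 1)),
   ((0, 2, 0), (1, 0, 2)), ((0, 2, 1), (4, 1, 2)), ((1, 0, 1), (0, 2, 0)), ((1, 0, 2), (2, 2, 0)),
   ((1, 1, 0), (0, 2, 2)), ((1, 1, 1), (5, 2, 2)), ((1, 1, 2), (5, 2, 1)), ((2, 0, 1), (0, 1, 2)),
   ((1, 2, 0), (2, 0, 2)), ((2, 1, 2), (6, 2, 1)), ((2, 2, 0), (3, 0, 2)), ((3, 0, 1), (2, 1, 0)),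
   ((3, 1, 2), (7, 2, 1)), ((4, 0, 2), (1, 1, 1)), ((4, 1, 0), (3, 0, 1)), ((4, 2, 0), (1, 0, 1)),
   ((3, 2, 0), (1, 1, 2)), ((4, 0, 1), (3, 1, 0)), ((4, 1, 2), (8, 2, 1)), ((4, 2, 2), (8, 1, 1)),
   ((5, 0, 2), (2, 1, 1)), ((3, 0, 0), (1, 2, 1)), ((4, 0, 0), (3, 1, 1)), ((5, 1, 0), (3, 2, 2)),
   ((2, 0, 0), (0, 2, 1)), ((1, 0, 0), (2, 2, 2)), ((5, 1, 1), (9, 2, 2)), ((5, 2, 2), (9, 1, 1)),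
   ((6, 0, 2), (7, 2, 0)), ((6, 1, 1), (5, 0, 0)), ((6, 1, 2), (4, 2, 0)), ((6, 0, 1), (5, 1, 0)),
   ((6, 2, 1), (4, 0, 0)), ((7, 0, 1), (6, 1, 0)), ((7, 1, 0), (6, 0, 1)), ((7, 1, 2), (4, 0, 1)),
   ((6, 2, 0), (7, 0, 2)), ((7, 2, 0), (8, 0, 2)), ((7, 2, 2), (8, 0, 0)), ((8, 1, 0), (6, 2, 2)),
   ((2, 1, 1), (0, 0, 2)), ((8, 1, 1), (5, 0, 2)), ((8, 2, 1), (6, 0, 0)), ((7, 1, 1), (4, 0, 2)),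
   ((8, 2, 2), (9, 0, 0)), ((9, 0, 2), (7, 1, 1)), ((3, 2, 2), (1, 1, 0)), ((9, 2, 1), (7, 0, 0)),
   ((6, 2, 2), (4, 1, 0)), ((9, 2, 2), (8, 1, 0)), ((4, 2, 1), (1, 0, 0)), ((0, 2, 2), (4, 1, 1)),
   ((3, 2, 1), (7, 1, 2)), ((7, 0, 2), (8, 2, 0)), ((9, 0, 1), (9, 1, 0)), ((9, 1, 2), (7, 0, 1)),
   ((9, 2, 0), (8, 0, 1)), ((0, 1, 1), (0, 0, 0)), ((1, 2, 1), (5, 1, 2)), ((2, 2, 1), (6, 1, 2)),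
   ((6, 1, 0), (5, 0, 1)), ((8, 1, 2), (6, 2, 0)), ((8, 0, 1), (5, 2, 0)), ((8, 2, 0), (9, 0, 2)),
   ((2, 0, 2), (0, 1, 1)), ((0, 0, 0), (1, 2, 2)), ((3, 1, 0), (2, 0, 1)), ((5, 0, 1), (2, 1, 2)),
   ((5, 1, 2), (9, 2, 1)), ((5, 2, 0), (3, 1, 2)), ((4, 1, 1), (3, 0, 0)), ((2, 2, 2), (6, 1, 1)),
   ((9, 1, 0), (9, 0, 1)), ((5, 2, 1), (2, 0, 0)), ((1, 2, 2), (5, 1, 1))]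

theorem pivots_triangular :
    isTriangularPivotList (koszulFlattening fun a b j => perHessian (directions j) a b)
      pivots = true := by
  decide +kernel

theorem koszulFlattening_perHessian_intCast {R : Type*} [CommRing R]
    (x y : Fin 10 × Fin 3 × Fin 3) :
    koszulFlattening (fun a b j => perHessian (fun z => (directions j z : R)) a b) x y =
      (koszulFlattening (fun a b j => perHessian (directions j) a b) x y : ℤ) := by
  rw [koszulFlattening, koszulFlattening, ← wedgeTwo_intCast]
  congr! 2 with j
  simp only [perHessian]
  split_ifs <;> simp

theorem rank_koszulFlattening_perHessian {k : Type*} [Field k] [CharZero k] :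
    79 ≤ (koszulFlattening fun a b j =>
      perHessian (fun z => (directions j z : k)) a b).rank := by
  have hpivots := (isTriangularPivotList_iff _ _).1 pivots_triangular
  refine Matrix.length_le_rank_of_pairwise _ pivots ?_ ?_ <;>
    simp only [koszulFlattening_perHessian_intCast, ne_eq, Int.cast_eq_zero]
  exacts [hpivots.1, hpivots.2]

/-- Over a field of characteristic 0, the Waring rank of `per₃` is at least 14:
it cannot be written as a linear combination of 13 (or fewer) cubes of linear forms. -/
theorem per3_not_sum_of_13_cubes (k : Type*) [Field k] [CharZero k] :
    ¬ ∃ (c : Fin 13 → k) (a : Fin 13 → (Fin 3 × Fin 3) → k),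
        per3 k = ∑ i, C (c i) * linForm (a i) ^ 3 := by
  rintro ⟨c, a, h⟩
  have hT : (fun (x y : Fin 3 × Fin 3) (j : Fin 5) =>
      perHessian (fun z => (directions j z : k)) x y) =
      fun x y => ∑ i, (a i x * a i y) •
        fun j => 6 * c i * (a i ⬝ᵥ fun z => (directions j z : k)) := by
    funext x y j
    have hpol := polarization_eval_per3 (fun z => (directions j z : k))
      (Pi.single x 1) (Pi.single y 1)
    rw [h, polarization_eval_sum_cubes] at hpol
    simp only [Pi.single_apply, mul_ite, mul_one, mul_zero, Finset.sum_ite_eq', Finset.mem_univ,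
      if_true] at hpol
    rw [← hpol, Finset.sum_apply]
    refine Finset.sum_congr rfl fun i _ => ?_
    simp only [dotProduct_single_one, Pi.smul_apply, smul_eq_mul]
    ring
  have hlower := rank_koszulFlattening_perHessian (k := k)
  rw [hT] at hlower
  have hupper := rank_koszulFlattening_le
    (fun i j => 6 * c i * (a i ⬝ᵥ fun z => (directions j z : k))) a a
  rw [Fintype.card_fin] at hupper
  omega
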